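/- Let p > 5 be a prime, K a field of characteristic p, s, t nonzero elements of K, and F = x*y*z^3 + s*x^5 + t*y^5 ∈ K[x,y,z]. Then the coefficient of x^i*y^j*z^k in F^(p-1) is zero for every (i,j,k) in E(p) if and only if p ≡ 2 (mod 3) and (p ≡ 1 (mod 5) or p ≡ 4 (mod 5)). -/

import Mathlib

open MvPolynomial

/-- The set of 25 exponent triples from the Hasse–Witt criterion for
`x*y*z^3 + s*x^5 + t*y^5`. -/
def Ep (p : ℕ) : Finset (ℕ × ℕ × ℕ) :=
  { (3*p-3, p-1, p-1), (3*p-1, p-3, p-1), (3*p-2, p-2, p-1), (3*p-2, p-1, p-2),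
    (3*p-1, p-2, p-2),
    (p-3, 3*p-1, p-1), (p-1, 3*p-3, p-1), (p-2, 3*p-2, p-1), (p-2, 3*p-1, p-2),
    (p-1, 3*p-2, p-2),
    (2*p-3, 2*p-1, p-1), (2*p-1, 2*p-3, p-1), (2*p-2, 2*p-2, p-1), (2*p-2, 2*p-1, p-2),
    (2*p-1, 2*p-2, p-2),
    (2*p-3, p-1, 2*p-1), (2*p-1, p-3, 2*p-1), (2*p-2, p-2, 2*p-1), (2*p-2, p-1, 2*p-2),
    (2*p-1, p-2, 2*p-2),
    (p-3, 2*p-1, 2*p-1), (p-1, 2*p-3, 2*p-1), (p-2, 2*p-2, 2*p-1), (p-2, 2*p-1, 2*p-2),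
    (p-1, 2*p-2, 2*p-2) }

/-! The exponent vectors `(1, 1, 3)`, `(5, 0, 0)`, `(0, 5, 0)` of the three terms of
`F = x y z³ + s x⁵ + t y⁵` are affinely independent, so distinct terms of the multinomial expansion
of `F ^ n` never merge: the coefficient of `F ^ n` at `a (1, 1, 3) + b (5, 0, 0) + c (0, 5, 0)`,
where `a + b + c = n`, is a multinomial coefficient times `s ^ b * t ^ c`. For `n = p - 1` this is
nonzero, since `p` does not divide `(p - 1)!`. The criterion therefore says that no triple in `Ep p`
is of this form, which is a matter of congruences modulo `3` and `5`. -/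

section MonomialSums

variable {ι σ R : Type*} [DecidableEq ι] [CommSemiring R]

lemma sum_monomial_pow (I : Finset ι) (e : ι → σ →₀ ℕ) (r : ι → R) (n : ℕ) :
    (∑ i ∈ I, monomial (e i) (r i)) ^ n =
      ∑ k ∈ I.piAntidiag n,
        monomial (∑ i ∈ I, k i • e i) (Nat.multinomial I k * ∏ i ∈ I, r i ^ k i) := by
  rw [Finset.sum_pow_eq_sum_piAntidiag]
  refine Finset.sum_congr rfl fun k _ => ?_
  simp only [monomial_pow, ← monomial_sum_prod]
  rw [← map_natCast C, C_mul_monomial]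

lemma coeff_sum_monomial_pow_eq_zero {I : Finset ι} {e : ι → σ →₀ ℕ} {n : ℕ} {d : σ →₀ ℕ}
    (hd : ∀ k ∈ I.piAntidiag n, ∑ i ∈ I, k i • e i ≠ d) (r : ι → R) :
    coeff d ((∑ i ∈ I, monomial (e i) (r i)) ^ n) = 0 := by
  classical
  rw [sum_monomial_pow, coeff_sum]
  exact Finset.sum_eq_zero fun k hk => by rw [coeff_monomial, if_neg (hd k hk)]

lemma coeff_sum_monomial_pow_of_injOn {I : Finset ι} {e : ι → σ →₀ ℕ} {n : ℕ}
    (he : Set.InjOn (fun k : ι → ℕ => ∑ i ∈ I, k i • e i) (I.piAntidiag n)) (r : ι → R)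
    {k : ι → ℕ} (hk : k ∈ I.piAntidiag n) :
    coeff (∑ i ∈ I, k i • e i) ((∑ i ∈ I, monomial (e i) (r i)) ^ n) =
      Nat.multinomial I k * ∏ i ∈ I, r i ^ k i := by
  classical
  rw [sum_monomial_pow, coeff_sum, Finset.sum_eq_single_of_mem k hk, coeff_monomial, if_pos rfl]
  intro l hl hlk
  rw [coeff_monomial, if_neg fun h => hlk (he hl hk h)]

end MonomialSums

lemma not_dvd_multinomial_of_sum_lt {ι : Type*} {p : ℕ} (hp : p.Prime) {I : Finset ι} {k : ι → ℕ}
    (hk : ∑ i ∈ I, k i < p) : ¬ p ∣ Nat.multinomial I k := fun h =>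
  have hdvd : Nat.multinomial I k ∣ (∑ i ∈ I, k i).factorial :=
    Dvd.intro_left _ (Nat.multinomial_spec I k)
  hk.not_ge (hp.dvd_factorial.mp (h.trans hdvd))

lemma pow_mul_pow_ne_zero_of_not_isNilpotent_mul {M : Type*} [CommMonoidWithZero M] {s t : M}
    (hst : ¬ IsNilpotent (s * t)) (b c : ℕ) : s ^ b * t ^ c ≠ 0 := by
  refine fun h => hst ⟨b + c, ?_⟩
  calc (s * t) ^ (b + c) = (s ^ b * t ^ c) * (s ^ c * t ^ b) := by
        rw [mul_pow, pow_add, add_comm, pow_add, mul_mul_mul_comm]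
    _ = 0 := by rw [h, zero_mul]

/-- The exponent triple `(i, j, l)` as the exponent vector of `x ^ i * y ^ j * z ^ l`, in the form
in which the Hasse–Witt criterion writes it. -/
noncomputable def exponentVector (d : ℕ × ℕ × ℕ) : Fin 3 →₀ ℕ :=
  Finsupp.single 0 d.1 + Finsupp.single 1 d.2.1 + Finsupp.single 2 d.2.2

lemma exponentVector_injective : Function.Injective exponentVector := by
  rintro ⟨i, j, l⟩ ⟨i', j', l'⟩ h
  have hi : i = i' := by simpa [exponentVector] using DFunLike.congr_fun h 0
  have hj : j = j' := by simpa [exponentVector] using DFunLike.congr_fun h 1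
  have hl : l = l' := by simpa [exponentVector] using DFunLike.congr_fun h 2
  rw [hi, hj, hl]

lemma monomial_exponentVector {R : Type*} [CommSemiring R] (i j l : ℕ) (r : R) :
    monomial (exponentVector (i, j, l)) r = C r * X 0 ^ i * X 1 ^ j * X 2 ^ l := by
  simp only [exponentVector, X_pow_eq_monomial, C_mul_monomial, monomial_mul, mul_one]

/-- `d` is the exponent triple of a term of the formal expansion of `(x y z³ + x⁵ + y⁵) ^ n`; the
witnesses `a`, `b`, `c` count how often each of the three monomials is chosen. -/
def IsExpansionExponent (n : ℕ) (d : ℕ × ℕ × ℕ) : Prop :=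
  ∃ a b c, a + b + c = n ∧ (a + 5 * b, a + 5 * c, 3 * a) = d

/-- The quintic form `x y z³ + s x⁵ + t y⁵` whose vanishing defines the trigonal curve. -/
noncomputable def trigonalQuintic {R : Type*} [CommSemiring R] (s t : R) : MvPolynomial (Fin 3) R :=
  X 0 * X 1 * X 2 ^ 3 + C s * X 0 ^ 5 + C t * X 1 ^ 5

/-- The exponent vectors of the terms of `trigonalQuintic`, in order. -/
noncomputable def trigonalQuinticExponent : Fin 3 → Fin 3 →₀ ℕ :=
  ![exponentVector (1, 1, 3), exponentVector (5, 0, 0), exponentVector (0, 5, 0)]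

lemma sum_smul_trigonalQuinticExponent (k : Fin 3 → ℕ) :
    ∑ i, k i • trigonalQuinticExponent i =
      exponentVector (k 0 + 5 * k 1, k 0 + 5 * k 2, 3 * k 0) := by
  ext v
  fin_cases v <;>
    simp [trigonalQuinticExponent, exponentVector, Fin.sum_univ_three, mul_comm]

lemma sum_smul_trigonalQuinticExponent_injective :
    Function.Injective fun k : Fin 3 → ℕ => ∑ i, k i • trigonalQuinticExponent i := by
  intro k l hkl
  simp only [sum_smul_trigonalQuinticExponent] at hkl
  obtain ⟨hx, hy, hz⟩ : k 0 + 5 * k 1 = l 0 + 5 * l 1 ∧ k 0 + 5 * k 2 = l 0 + 5 * l 2 ∧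
      3 * k 0 = 3 * l 0 := by
    simpa only [Prod.mk.injEq] using exponentVector_injective hkl
  funext i
  fin_cases i <;> dsimp <;> omega

section Coefficients

variable {R : Type*}

lemma trigonalQuintic_eq_sum_monomial [CommSemiring R] (s t : R) :
    trigonalQuintic s t = ∑ i, monomial (trigonalQuinticExponent i) (![1, s, t] i) := by
  simp [trigonalQuintic, trigonalQuinticExponent, monomial_exponentVector, Fin.sum_univ_three]

lemma coeff_trigonalQuintic_pow_eq_zero [CommSemiring R] (s t : R) {n : ℕ} {d : ℕ × ℕ × ℕ}
    (hd : ¬ IsExpansionExponent n d) :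
    coeff (exponentVector d) (trigonalQuintic s t ^ n) = 0 := by
  rw [trigonalQuintic_eq_sum_monomial]
  refine coeff_sum_monomial_pow_eq_zero (fun k hk hkd => hd ⟨k 0, k 1, k 2, ?_, ?_⟩) _
  · rw [← Fin.sum_univ_three, (Finset.mem_piAntidiag.mp hk).1]
  · exact exponentVector_injective ((sum_smul_trigonalQuinticExponent k).symm.trans hkd)

lemma coeff_trigonalQuintic_pow [CommSemiring R] (s t : R) (a b c : ℕ) :
    coeff (exponentVector (a + 5 * b, a + 5 * c, 3 * a)) (trigonalQuintic s t ^ (a + b + c)) =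
      Nat.multinomial Finset.univ ![a, b, c] * (s ^ b * t ^ c) := by
  have hk : ![a, b, c] ∈ Finset.univ.piAntidiag (a + b + c) := by
    simp [Fin.sum_univ_three]
  have hcoeff := coeff_sum_monomial_pow_of_injOn
    sum_smul_trigonalQuinticExponent_injective.injOn ![1, s, t] hk
  rw [sum_smul_trigonalQuinticExponent, ← trigonalQuintic_eq_sum_monomial] at hcoeff
  simpa [Fin.prod_univ_three] using hcoeff

lemma coeff_trigonalQuintic_pow_eq_zero_iff [CommRing R] {p : ℕ} [CharP R p] (hp : p.Prime)
    {s t : R} (hst : ¬ IsNilpotent (s * t)) {n : ℕ} (hn : n < p) (d : ℕ × ℕ × ℕ) :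
    coeff (exponentVector d) (trigonalQuintic s t ^ n) = 0 ↔ ¬ IsExpansionExponent n d := by
  refine ⟨?_, coeff_trigonalQuintic_pow_eq_zero s t⟩
  rintro hzero ⟨a, b, c, rfl, rfl⟩
  have hunit : IsUnit (Nat.multinomial Finset.univ ![a, b, c] : R) :=
    (CharP.isUnit_natCast_iff hp).mpr
      (not_dvd_multinomial_of_sum_lt hp (by simpa [Fin.sum_univ_three] using hn))
  rw [coeff_trigonalQuintic_pow, hunit.mul_right_eq_zero] at hzero
  exact pow_mul_pow_ne_zero_of_not_isNilpotent_mul hst b c hzero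

end Coefficients

lemma exists_mem_Ep_isExpansionExponent_of_mod_three_eq_one {p : ℕ} (hp : p % 3 = 1) :
    ∃ d ∈ Ep p, IsExpansionExponent (p - 1) d :=
  ⟨(2 * p - 2, 2 * p - 2, p - 1), by simp [Ep],
    p / 3, p / 3, p / 3, by omega, by ext <;> dsimp <;> omega⟩

-- Each triple `(i, j, l)` satisfies `3 ∣ l` and `3 * i ≡ l [MOD 5]`, which makes the counts
-- `a = l / 3`, `b = (i - a) / 5` and `c = (j - a) / 5` integral.
lemma exists_mem_Ep_isExpansionExponent_of_mod_three_eq_two {p : ℕ} (hp3 : p % 3 = 2)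
    (hp5 : ¬ (p % 5 = 1 ∨ p % 5 = 4)) : ∃ d ∈ Ep p, IsExpansionExponent (p - 1) d := by
  have hmod : p % 5 = 0 ∨ p % 5 = 2 ∨ p % 5 = 3 := by omega
  rcases hmod with h | h | h
  · exact ⟨(2 * p - 2, p - 2, 2 * p - 1), by simp [Ep],
      (2 * p - 1) / 3, (4 * p - 5) / 15, (p - 5) / 15, by omega, by ext <;> dsimp <;> omega⟩
  · exact ⟨(3 * p - 1, p - 2, p - 2), by simp [Ep],
      (p - 2) / 3, (8 * p - 1) / 15, (2 * p - 4) / 15, by omega, by ext <;> dsimp <;> omega⟩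
  · exact ⟨(3 * p - 2, p - 1, p - 2), by simp [Ep],
      (p - 2) / 3, (8 * p - 4) / 15, (2 * p - 1) / 15, by omega, by ext <;> dsimp <;> omega⟩

lemma not_isExpansionExponent_of_mem_Ep {p : ℕ} (hp3 : p % 3 = 2) (hp5 : p % 5 = 1 ∨ p % 5 = 4)
    {d : ℕ × ℕ × ℕ} (hd : d ∈ Ep p) : ¬ IsExpansionExponent (p - 1) d := by
  rintro ⟨a, b, c, -, rfl⟩
  simp only [Ep, Finset.mem_insert, Finset.mem_singleton, Prod.mk.injEq] at hd
  have hz : 3 * a = p - 2 ∨ 3 * a = 2 * p - 1 := by omega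
  omega

theorem forall_mem_Ep_not_isExpansionExponent_iff {p : ℕ} (hp : ¬ 3 ∣ p) :
    (∀ d ∈ Ep p, ¬ IsExpansionExponent (p - 1) d) ↔ p % 3 = 2 ∧ (p % 5 = 1 ∨ p % 5 = 4) := by
  refine ⟨fun h => ?_, fun ⟨hp3, hp5⟩ _ => not_isExpansionExponent_of_mem_Ep hp3 hp5⟩
  by_contra hmod
  have hcases : p % 3 = 1 ∨ p % 3 = 2 ∧ ¬ (p % 5 = 1 ∨ p % 5 = 4) := by omega
  obtain ⟨d, hd, hexp⟩ : ∃ d ∈ Ep p, IsExpansionExponent (p - 1) d :=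
    hcases.elim exists_mem_Ep_isExpansionExponent_of_mod_three_eq_one fun ⟨hp3, hp5⟩ =>
      exists_mem_Ep_isExpansionExponent_of_mod_three_eq_two hp3 hp5
  exact h d hd hexp

-- At `p = 3` the criterion fails: no `z`-exponent in `Ep 3` is a multiple of `3`, so all the
-- coefficients vanish. At `p = 2` the truncated `p - 3` in `Ep` is harmless: both sides are
-- false, the left one because `(3 * p - 1, p - 2, p - 2)` is the exponent of `s * x ^ 5`.
theorem stmt_11_general {p : ℕ} (hp : p.Prime) (hp3 : p ≠ 3) {R : Type*} [CommRing R] [CharP R p]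
    {s t : R} (hst : ¬ IsNilpotent (s * t)) :
    (∀ d ∈ Ep p, coeff (exponentVector d) (trigonalQuintic s t ^ (p - 1)) = 0) ↔
      p % 3 = 2 ∧ (p % 5 = 1 ∨ p % 5 = 4) := by
  have hdvd : ¬ 3 ∣ p := fun h => hp3 ((Nat.prime_dvd_prime_iff_eq Nat.prime_three hp).mp h).symm
  simp only [coeff_trigonalQuintic_pow_eq_zero_iff hp hst (Nat.sub_lt hp.pos one_pos)]
  exact forall_mem_Ep_not_isExpansionExponent_iff hdvd

/-- Hasse–Witt criterion: for a prime `p > 5`, a field `K` of characteristic `p`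
and nonzero `s, t : K`, all coefficients of `F^(p-1)` at the exponent triples of
`Ep p` vanish iff `p ≡ 2 (mod 3)` and `p ≡ 1` or `4 (mod 5)`, where
`F = x*y*z^3 + s*x^5 + t*y^5`. -/
theorem stmt_11 (p : ℕ) (hp : p.Prime) (hp5 : 5 < p)
    (K : Type*) [Field K] [CharP K p] (s t : K) (hs : s ≠ 0) (ht : t ≠ 0) :
    (∀ ijk ∈ Ep p,
      MvPolynomial.coeff
        (Finsupp.single (0 : Fin 3) ijk.1 + Finsupp.single 1 ijk.2.1 +
          Finsupp.single 2 ijk.2.2)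
        ((X 0 * X 1 * X 2 ^ 3 + C s * X 0 ^ 5 + C t * X 1 ^ 5 :
            MvPolynomial (Fin 3) K) ^ (p - 1)) = 0) ↔
    (p % 3 = 2 ∧ (p % 5 = 1 ∨ p % 5 = 4)) :=
  stmt_11_general hp (by omega) (by rw [isNilpotent_iff_eq_zero]; exact mul_ne_zero hs ht)
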